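/- arXiv:1905.10061 — 2 statements merged into one kernel-verified Lean document; each statement's English description precedes it below -/
import Mathlib

section
/- Let (X₁,d₁) and (X₂,d₂) be metric spaces carrying non-autonomous systems φ_{1,∞} and ψ_{1,∞} respectively, and suppose there is a homeomorphism h : X₁ → X₂ such that both h and h⁻¹ are uniformly continuous and h ∘ φ_n = ψ_n ∘ h for all n ≥ 1. If (X₁, φ_{1,∞}) is ℵ₀-expansive, then (X₂, ψ_{1,∞}) is ℵ₀-expansive. -/
open Set Metric Filter Topology

/-- `phiComp φ n = φ_n ∘ ⋯ ∘ φ_1` (with `phiComp φ 0 = id`), the compositions of the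
non-autonomous system `φ_{1,∞}` given by the maps `φ 1, φ 2, …` (`φ 0` is unused). -/
def phiComp {X : Type*} (φ : ℕ → X → X) : ℕ → X → X
  | 0 => id
  | n + 1 => φ (n + 1) ∘ phiComp φ n

/-- For a system of homeomorphisms, `phiCompH φ n = φ_n ∘ ⋯ ∘ φ_1` as a homeomorphism. -/
def phiCompH {X : Type*} [TopologicalSpace X] (φ : ℕ → X ≃ₜ X) : ℕ → X ≃ₜ X
  | 0 => Homeomorph.refl X
  | n + 1 => (phiCompH φ n).trans (φ (n + 1))

/-- Two-sided compositions: `phiZ φ i = φ₁^i` for `i ≥ 0` and `φ₁^i = (φ₁^{|i|})⁻¹` for `i < 0`. -/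
def phiZ {X : Type*} [TopologicalSpace X] (φ : ℕ → X ≃ₜ X) (i : ℤ) : X → X :=
  if 0 ≤ i then ⇑(phiCompH φ i.toNat) else ⇑(phiCompH φ (-i).toNat).symm

/-- `segComp φ a m = φ_{a+m} ∘ ⋯ ∘ φ_{a+1}`. -/
def segComp {X : Type*} (φ : ℕ → X → X) (a : ℕ) : ℕ → X → X
  | 0 => id
  | m + 1 => φ (a + m + 1) ∘ segComp φ a m

/-- The `k`-th iterate system `(φ_{1,∞})^k`: its `n`-th map is
`φ_{nk} ∘ ⋯ ∘ φ_{(n-1)k+1}`. -/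
def iterateSys {X : Type*} (φ : ℕ → X → X) (k : ℕ) : ℕ → X → X :=
  fun n => segComp φ ((n - 1) * k) k

/-- `(X, φ_{1,∞})` is `n₀`-expansive (one-sided). -/
def IsNExpansive {X : Type*} [MetricSpace X] (φ : ℕ → X → X) (n₀ : ℕ) : Prop :=
  ∃ c > (0 : ℝ), ∀ x : X,
    {y : X | ∀ i : ℕ, dist (phiComp φ i x) (phiComp φ i y) ≤ c}.encard ≤ (n₀ : ℕ∞)

/-- `(X, φ_{1,∞})` is ℵ₀-expansive (one-sided). -/
def IsAleph0Expansive {X : Type*} [MetricSpace X] (φ : ℕ → X → X) : Prop :=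
  ∃ c > (0 : ℝ), ∀ x : X,
    {y : X | ∀ i : ℕ, dist (phiComp φ i x) (phiComp φ i y) ≤ c}.Countable

/-- `(X, φ_{1,∞})` is `n₀`-expansive in the two-sided sense. -/
def IsNExpansiveZ {X : Type*} [MetricSpace X] (φ : ℕ → X ≃ₜ X) (n₀ : ℕ) : Prop :=
  ∃ c > (0 : ℝ), ∀ x : X,
    {y : X | ∀ i : ℤ, dist (phiZ φ i x) (phiZ φ i y) ≤ c}.encard ≤ (n₀ : ℕ∞)

/-- `(X, φ_{1,∞})` is ℵ₀-expansive in the two-sided sense. -/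
def IsAleph0ExpansiveZ {X : Type*} [MetricSpace X] (φ : ℕ → X ≃ₜ X) : Prop :=
  ∃ c > (0 : ℝ), ∀ x : X,
    {y : X | ∀ i : ℤ, dist (phiZ φ i x) (phiZ φ i y) ≤ c}.Countable

/-- `(X, φ_{1,∞})` is continuum-wise expansive. -/
def IsCwExpansive {X : Type*} [MetricSpace X] (φ : ℕ → X → X) : Prop :=
  ∃ c > (0 : ℝ), ∀ C : Set X, IsCompact C → IsConnected C → C.Nontrivial →
    ∃ n : ℕ, c < Metric.diam (phiComp φ n '' C)

/-- `(X, φ_{1,∞})` is meagre-expansive (one-sided). -/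
def IsMeagreExpansive {X : Type*} [MetricSpace X] (φ : ℕ → X → X) : Prop :=
  ∃ c > (0 : ℝ), ∀ x : X,
    IsNowhereDense {y : X | ∀ i : ℕ, dist (phiComp φ i x) (phiComp φ i y) ≤ c}

/-- The closed dynamical ball `Γ_c(x)` of a family of self-maps `F i`: the points whose images
stay within distance `c` of those of `x`. The index set is arbitrary; the one-sided ball of
`φ_{1,∞}` is the case `F = phiComp φ`. -/
def dynamicalBall {ι X : Type*} [PseudoMetricSpace X] (F : ι → X → X) (c : ℝ) (x : X) : Set X :=
  {y | ∀ i, dist (F i x) (F i y) ≤ c}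

theorem exists_dynamicalBall_subset_preimage {ι X Y : Type*} [PseudoMetricSpace X]
    [PseudoMetricSpace Y] {F : ι → X → X} {G : ι → Y → Y} {g : Y → X}
    (hg : UniformContinuous g) (hsemi : ∀ i, Function.Semiconj g (G i) (F i))
    {c : ℝ} (hc : 0 < c) :
    ∃ δ > 0, ∀ y, dynamicalBall G δ y ⊆ g ⁻¹' dynamicalBall F c (g y) := by
  obtain ⟨δ, hδ, hdist⟩ := Metric.uniformContinuous_iff_le.1 hg c hc
  refine ⟨δ, hδ, fun y z hz i => ?_⟩
  rw [← (hsemi i).eq, ← (hsemi i).eq]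
  exact hdist (hz i)

theorem semiconj_phiComp {X Y : Type*} {φ : ℕ → X → X} {ψ : ℕ → Y → Y} {g : Y → X}
    (hsemi : ∀ n, 1 ≤ n → Function.Semiconj g (ψ n) (φ n)) (i : ℕ) :
    Function.Semiconj g (phiComp ψ i) (phiComp φ i) := by
  induction i with
  | zero => exact Function.Semiconj.id_right
  | succ n ih => exact (hsemi (n + 1) n.succ_pos).comp_right ih

theorem stmt3_general {X Y : Type*} [MetricSpace X] [MetricSpace Y]
    {φ : ℕ → X → X} {ψ : ℕ → Y → Y} {g : Y → X} (hinj : Function.Injective g)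
    (hg : UniformContinuous g) (hsemi : ∀ n, 1 ≤ n → Function.Semiconj g (ψ n) (φ n))
    (hexp : IsAleph0Expansive φ) : IsAleph0Expansive ψ := by
  obtain ⟨c, hc, hcount⟩ := hexp
  obtain ⟨δ, hδ, hsub⟩ := exists_dynamicalBall_subset_preimage hg (semiconj_phiComp hsemi) hc
  exact ⟨δ, hδ, fun y => ((hcount (g y)).preimage hinj).mono (hsub y)⟩

/-- ℵ₀-expansiveness is preserved by uniform conjugacy. -/
theorem stmt3 {X₁ X₂ : Type*} [MetricSpace X₁] [MetricSpace X₂]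
    (φ : ℕ → X₁ → X₁) (ψ : ℕ → X₂ → X₂)
    (hφ : ∀ n, 1 ≤ n → Continuous (φ n)) (hψ : ∀ n, 1 ≤ n → Continuous (ψ n))
    (h : X₁ ≃ₜ X₂) (hu : UniformContinuous h) (hu' : UniformContinuous h.symm)
    (hconj : ∀ n, 1 ≤ n → (h : X₁ → X₂) ∘ φ n = ψ n ∘ (h : X₁ → X₂))
    (hexp : IsAleph0Expansive φ) : IsAleph0Expansive ψ :=
  stmt3_general h.symm.injective hu' (fun n hn => Function.Semiconj.inverse_left
    (Function.semiconj_iff_comp_eq.2 (hconj n hn)) h.left_inv h.right_inv) hexp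
end

section
/- Let (X,d) be a nonempty Lindelöf metric space and let φ_n : X → X (n ≥ 1) be homeomorphisms such that the two-sided system is uniformly equicontinuous (for every ε > 0 there exists δ > 0 such that d(x,y) ≤ δ implies d(φ₁^i(x), φ₁^i(y)) ≤ ε for all i ∈ ℤ). Then (X, φ_{1,∞}) is not meagre-expansive in the two-sided sense. -/
open Set Metric Filter Topology

/-- The closed dynamical (Bowen) ball about `x`: the points whose image under every member of the
family `F` stays within `c` of the image of `x`. For the compositions `φ₁^i`, `i ∈ ℤ`, of a
non-autonomous system, these are the sets in the definition of two-sided meagre-expansiveness. -/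
def dynamicalClosedBall {ι X Y : Type*} [PseudoMetricSpace Y] (F : ι → X → Y) (x : X) (c : ℝ) :
    Set X :=
  {y | ∀ i, dist (F i x) (F i y) ≤ c}

theorem not_isNowhereDense_of_mem_nhds {X : Type*} [TopologicalSpace X] {s : Set X} {x : X}
    (hs : s ∈ 𝓝 x) : ¬ IsNowhereDense s := fun hdense =>
  isNowhereDense_iff_forall_notMem_nhds.1 hdense x (mem_of_mem_nhds hs)
    (mem_of_superset hs subset_closure)

section Equicontinuous

variable {ι X Y : Type*} [PseudoMetricSpace Y] {F : ι → X → Y}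

theorem uniformEquicontinuous_iff_dist_le [PseudoMetricSpace X] :
    UniformEquicontinuous F ↔
      ∀ ε > 0, ∃ δ > 0, ∀ x y, dist x y ≤ δ → ∀ i, dist (F i x) (F i y) ≤ ε :=
  uniformity_basis_dist_le.uniformEquicontinuous_iff uniformity_basis_dist_le

variable [TopologicalSpace X]

theorem dynamicalClosedBall_mem_nhds {x : X} {c : ℝ} (hF : EquicontinuousAt F x) (hc : 0 < c) :
    dynamicalClosedBall F x c ∈ 𝓝 x :=
  hF _ (uniformity_basis_dist_le.mem_of_mem hc)

theorem stmt19_general {x : X} (hF : EquicontinuousAt F x) :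
    ¬ ∃ c > (0 : ℝ), ∀ y : X, IsNowhereDense (dynamicalClosedBall F y c) := by
  rintro ⟨c, hc, hdense⟩
  exact not_isNowhereDense_of_mem_nhds (dynamicalClosedBall_mem_nhds hF hc) (hdense x)

end Equicontinuous

/-- On a nonempty Lindelöf metric space, a uniformly equicontinuous (in the
two-sided sense) non-autonomous system of homeomorphisms is never meagre-expansive in the
two-sided sense. -/
theorem stmt19 {X : Type*} [MetricSpace X] [Nonempty X] [LindelofSpace X]
    (φ : ℕ → X ≃ₜ X)
    (hequi : ∀ ε > (0 : ℝ), ∃ δ > (0 : ℝ), ∀ x y : X, dist x y ≤ δ →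
      ∀ i : ℤ, dist (phiZ φ i x) (phiZ φ i y) ≤ ε) :
    ¬ ∃ c > (0 : ℝ), ∀ x : X,
      IsNowhereDense {y : X | ∀ i : ℤ, dist (phiZ φ i x) (phiZ φ i y) ≤ c} := by
  obtain ⟨x⟩ := ‹Nonempty X›
  exact stmt19_general ((uniformEquicontinuous_iff_dist_le.2 hequi).equicontinuous x)
end
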